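/- Let n ≥ 2 and let f, g : 𝕋 → ℂ be continuous functions on 𝕋 = AddCircle (2π). Let a_I ≤ b_I and a_J ≤ b_J be real numbers with (b_I − a_I) + (b_J − a_J) < 2π/n, and set I = π_*([a_I, b_I]), J = π_*([a_J, b_J]). Assume supp f ⊆ R_n(I) with no strictly smaller closed subinterval I' = π_*([a', b']) (a_I ≤ a', b' ≤ b_I, (a', b') ≠ (a_I, b_I)) satisfying supp f ⊆ R_n(I'), and analogously for g with J. Let a_K, b_K be reals with a_I + a_J ≤ a_K ≤ b_K ≤ b_I + b_J and supp (f ⋆ g) ⊆ R_n(π_*([a_K, b_K])), and set ρ = b_I + b_J − b_K. If ρ > 0, then there exist α, β ∈ ℂ with α^n = β^n = 1 and α ≠ β such that: (i) F_α = ∑_{k=0}^{n−1} α^k S_{2πk/n} f vanishes on π_*((b_I − ρ, a_I + 2π/n)); (ii) G_α = ∑_{k=0}^{n−1} α^k S_{2πk/n} g vanishes on π_*((b_J, a_J + 2π/n)) and π_*(b_J) ∈ supp G_α; (iii) F_β = ∑_{k=0}^{n−1} β^k S_{2πk/n} f vanishes on π_*((b_I, a_I + 2π/n)) and π_*(b_I)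 ∈ supp F_β; (iv) G_β = ∑_{k=0}^{n−1} β^k S_{2πk/n} g vanishes on π_*((b_J − ρ, a_J + 2π/n)). -/

import Mathlib

open MeasureTheory Real Set Pointwise

noncomputable section

abbrev 𝕋 : Type := AddCircle (2 * π)

instance : Fact (0 < 2 * π) := ⟨by positivity⟩

/-- Natural projection `ℝ → 𝕋`. -/
def proj : ℝ → 𝕋 := fun r => (r : 𝕋)

/-- Convolution of functions on the circle with respect to Haar (Lebesgue) measure. -/
def circConv (f g : 𝕋 → ℂ) : 𝕋 → ℂ := fun x => ∫ t : 𝕋, f t * g (x - t)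

/-- Shift operator `(S_y f)(x) = f (x - y)`. -/
def shift (y : 𝕋) (f : 𝕋 → ℂ) : 𝕋 → ℂ := fun x => f (x - y)

/-- `Rn n A = ⋃_{k=0}^{n-1} (π_*(2πk/n) + A)`. -/
def Rn (n : ℕ) (A : Set 𝕋) : Set 𝕋 :=
  ⋃ k ∈ Finset.range n, (proj (2 * π * k / n) +ᵥ A)

/-!
The twisted sums `∑ₖ αᵏ S_{kh} f` over the `n`-th roots of unity `α` are eigenfunctions of the shift
by `h = T / n`, together they determine `f`, and convolution sends a pair of them with the same `α`
to the twice twisted sum of `f ⋆ g`. Because the two intervals together are shorter than `h`, one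
period of such a pair is a pair of compactly supported functions on the line, and Titchmarsh's
theorem on the line says that the right ends of their supports add up to at most `bK < bI + bJ`.
Hence for no single `α` do both twisted sums reach the right ends `bI` and `bJ`. By minimality of
the intervals, some twisted sum of `f` reaches `bI` and some twisted sum of `g` reaches `bJ`; the
loss `bI + bJ - bK` is then borne by their partners.

On the line, the right end of the support of a function is the exponential growth rate of its
Laplace transform on the positive half-axis (Phragmén–Lindelöf, Liouville and Riemann–Lebesgue).
With transforms `F` and `G` of `φ` and `ψ`, the identity `(F'G)² = (FG)' · F'G - FG · F'G'` shows
that the largest growth rates among the `F⁽ⁱ⁾G⁽ʲ⁾` with `i + j = m` form a sequence which, where it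
increases, is convex; being bounded, it never increases. So all the convolutions `(tᵏφ) ⋆ ψ` vanish
beyond the support of `φ ⋆ ψ`, and by density of polynomials `φ(t) ψ(x - t) = 0` for all such `x`.
-/

section Laplace

open Asymptotics Bornology Filter FourierTransform Function Topology

variable {E : Type*} [NormedAddCommGroup E] [NormedSpace ℂ E] {q : ℝ → E} {c : ℝ}

/-- The two-sided Laplace transform, with the sign convention `∫ e^{zt} q(t) dt`, so that the right
end of the support of `q` governs the growth of the transform on the positive half-line. -/
def laplace (q : ℝ → E) (z : ℂ) : E := ∫ t : ℝ, Complex.exp (z * t) • q t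

lemma norm_laplace_le (hq : Integrable q) {z : ℂ} {B : ℝ} (h : ∀ t ∈ support q, z.re * t ≤ B) :
    ‖laplace q z‖ ≤ Real.exp B * ∫ t, ‖q t‖ := by
  rw [laplace, ← integral_const_mul]
  refine norm_integral_le_of_norm_le (hq.norm.const_mul _) (ae_of_all _ fun t => ?_)
  rw [norm_smul, Complex.norm_exp, Complex.re_mul_ofReal]
  by_cases ht : q t = 0
  · simp [ht]
  · gcongr
    exact h t ht

lemma integrable_continuous_smul {g : ℝ → ℂ} (hg : Continuous g) (hq : Integrable q)
    (hqc : HasCompactSupport q) : Integrable fun t => g t • q t := by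
  have hsub : support (fun t => g t • q t) ⊆ tsupport q :=
    (support_smul_subset_right g q).trans (subset_tsupport q)
  exact (integrableOn_iff_integrable_of_support_subset hsub).1
    (hq.integrableOn.continuousOn_smul hg.continuousOn hqc.isCompact)

lemma integrable_cexp_smul (hq : Integrable q) (hqc : HasCompactSupport q) (z : ℂ) :
    Integrable fun t : ℝ => Complex.exp (z * t) • q t :=
  integrable_continuous_smul (by fun_prop) hq hqc

lemma laplace_add {r : ℝ → E} (hq : Integrable q) (hqc : HasCompactSupport q) (hr : Integrable r)
    (hrc : HasCompactSupport r) : laplace (q + r) = laplace q + laplace r := by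
  ext z
  simp only [laplace, Pi.add_apply, smul_add]
  exact integral_add (integrable_cexp_smul hq hqc z) (integrable_cexp_smul hr hrc z)

lemma laplace_comp_add_right (q : ℝ → E) (c : ℝ) (z : ℂ) :
    laplace (fun t => q (t + c)) z = Complex.exp (-(c * z)) • laplace q z := by
  rw [laplace, laplace, ← integral_smul, ← integral_add_right_eq_self
    (fun t : ℝ => Complex.exp (-(c * z)) • Complex.exp (z * t) • q t) c]
  congr 1 with t
  rw [smul_smul, ← Complex.exp_add]
  congr 2
  push_cast
  ring

lemma differentiable_laplace (hq : Integrable q) (hqc : HasCompactSupport q) :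
    Differentiable ℂ (laplace q) := by
  intro z₀
  obtain ⟨C, hC⟩ := ((isCompact_closedBall z₀ 1).prod hqc.isCompact).exists_bound_of_continuousOn
    (f := fun p : ℂ × ℝ => Complex.exp (p.1 * p.2) * p.2) (by fun_prop)
  refine (hasDerivAt_integral_of_dominated_loc_of_deriv_le
    (F := fun (z : ℂ) (t : ℝ) => Complex.exp (z * t) • q t)
    (F' := fun (z : ℂ) (t : ℝ) => (Complex.exp (z * t) * t) • q t)
    (bound := fun t => C * ‖q t‖) (Metric.ball_mem_nhds z₀ one_pos)
    (.of_forall fun z => (integrable_cexp_smul hq hqc z).aestronglyMeasurable)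
    (integrable_cexp_smul hq hqc z₀)
    (integrable_continuous_smul (by fun_prop) hq hqc).aestronglyMeasurable
    (ae_of_all _ fun t z hz => ?_) (hq.norm.const_mul C)
    (ae_of_all _ fun t z _ => ?_)).2.differentiableAt
  · rw [norm_smul]
    by_cases ht : q t = 0
    · simp [ht]
    · gcongr
      exact hC (z, t) ⟨Metric.ball_subset_closedBall hz, subset_tsupport q ht⟩
  · exact ((hasDerivAt_mul_const (t : ℂ)).cexp).smul_const (q t)

lemma laplace_isBigO_of_support_subset_Iic (hq : Integrable q) (hc : support q ⊆ Iic c) :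
    (fun x : ℝ => laplace q x) =O[𝓟 (Ici 0)] fun x => Real.exp (c * x) := by
  refine IsBigO.of_bound (∫ t, ‖q t‖) (eventually_principal.2 fun x hx => ?_)
  rw [Real.norm_of_nonneg (exp_pos _).le, mul_comm]
  refine norm_laplace_le hq fun t ht => ?_
  rw [Complex.ofReal_re, mul_comm]
  exact mul_le_mul_of_nonneg_right (hc ht) hx

lemma exists_laplace_isBigO_exp_norm (hq : Integrable q) (hqc : HasCompactSupport q)
    (l : Filter ℂ) : ∃ R : ℝ, laplace q =O[l] fun z => Real.exp (R * ‖z‖ ^ (1 : ℝ)) := by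
  obtain ⟨R, hR⟩ := hqc.isCompact.isBounded.exists_norm_le
  refine ⟨R, IsBigO.of_bound (∫ t, ‖q t‖) (.of_forall fun z => ?_)⟩
  rw [Real.norm_of_nonneg (exp_pos _).le, rpow_one, mul_comm]
  refine norm_laplace_le hq fun t ht => ?_
  calc z.re * t ≤ |z.re| * |t| := (le_abs_self _).trans (abs_mul _ _).le
    _ ≤ ‖z‖ * R := by
      gcongr
      exacts [Complex.abs_re_le_norm z, hR t (subset_tsupport q ht)]
    _ = R * ‖z‖ := mul_comm _ _

/-- On `Re z ≤ 0` the transform is bounded because `q` lives on `t ≥ 0`; Phragmén–Lindelöf in the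
first and fourth quadrants covers the rest of the plane. -/
lemma isBounded_range_laplace (hq : Integrable q) (hqc : HasCompactSupport q)
    (hq0 : support q ⊆ Ici 0) (hbd : (fun x : ℝ => laplace q x) =O[𝓟 (Ici 0)] fun _ => (1 : ℝ)) :
    IsBounded (range (laplace q)) := by
  obtain ⟨M, hM⟩ := hbd.bound
  simp only [eventually_principal, mem_Ici, norm_one, mul_one] at hM
  set N := ∫ t, ‖q t‖
  have hleft {z : ℂ} (hz : z.re ≤ 0) : ‖laplace q z‖ ≤ max M N := by
    refine (norm_laplace_le hq (B := 0) fun t ht => ?_).trans (by simp [N])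
    exact mul_nonpos_of_nonpos_of_nonneg hz (hq0 ht)
  have hright (x : ℝ) (hx : 0 ≤ x) : ‖laplace q x‖ ≤ max M N := (hM x hx).trans (le_max_left _ _)
  have himag (x : ℝ) : ‖laplace q (x * Complex.I)‖ ≤ max M N := hleft (by simp)
  have hgrowth (l : Filter ℂ) : ∃ r < (2 : ℝ), ∃ B,
      laplace q =O[l] fun z => Real.exp (B * ‖z‖ ^ r) :=
    ⟨1, one_lt_two, exists_laplace_isBigO_exp_norm hq hqc l⟩
  have hdiff := differentiable_laplace hq hqc
  refine isBounded_iff_forall_norm_le.2 ⟨max M N, forall_mem_range.2 fun z => ?_⟩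
  rcases le_total z.re 0 with hre | hre
  · exact hleft hre
  rcases le_total 0 z.im with him | him
  · exact PhragmenLindelof.quadrant_I hdiff.diffContOnCl (hgrowth _) hright
      (fun x _ => himag x) hre him
  · exact PhragmenLindelof.quadrant_IV hdiff.diffContOnCl (hgrowth _) hright
      (fun x _ => himag x) hre him

lemma fourier_eq_laplace (q : ℝ → E) (w : ℝ) :
    𝓕 q w = laplace q ((-2 * π * w : ℝ) * Complex.I) := by
  rw [Real.fourier_real_eq_integral_exp_smul, laplace]
  congr 1 with t
  congr 2
  push_cast
  ring

/-- A bounded transform is constant by Liouville, and the constant is `0` by Riemann–Lebesgue. -/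
lemma fourier_eq_zero_of_isBounded_range_laplace (hq : Integrable q) (hqc : HasCompactSupport q)
    (hbd : IsBounded (range (laplace q))) : 𝓕 q = 0 := by
  have hconst (w : ℝ) : 𝓕 q w = laplace q 0 := by
    rw [fourier_eq_laplace]
    exact (differentiable_laplace hq hqc).apply_eq_apply_of_bounded hbd _ _
  have hzero : laplace q 0 = 0 :=
    tendsto_nhds_unique (tendsto_const_nhds.congr fun w => (hconst w).symm)
      (Real.zero_at_infty_fourier q)
  ext w
  rw [hconst, hzero, Pi.zero_apply]

lemma apply_eq_zero_of_laplace_isBigO_one [CompleteSpace E] (hq : Integrable q)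
    (hqc : HasCompactSupport q) (hq0 : support q ⊆ Ici 0)
    (hbd : (fun x : ℝ => laplace q x) =O[𝓟 (Ici 0)] fun _ => (1 : ℝ))
    {t : ℝ} (ht : ContinuousAt q t) : q t = 0 := by
  have hF : 𝓕 q = 0 := fourier_eq_zero_of_isBounded_range_laplace hq hqc
    (isBounded_range_laplace hq hqc hq0 hbd)
  rw [← hq.fourierInv_fourier_eq (hF ▸ integrable_zero _ _ _) ht, hF, Real.fourierInv_eq]
  simp

lemma support_subset_Iic_zero_of_laplace_isBigO_one [CompleteSpace E] (hq : Continuous q)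
    (hqc : HasCompactSupport q) (hbd : (fun x : ℝ => laplace q x) =O[𝓟 (Ici 0)] fun _ => (1 : ℝ)) :
    support q ⊆ Iic 0 := by
  have hqi : Integrable q := hq.integrable_of_hasCompactSupport hqc
  set l : ℝ → E := (Iic 0).indicator q
  set r : ℝ → E := (Ioi 0).indicator q
  have hli : Integrable l := hqi.indicator measurableSet_Iic
  have hri : Integrable r := hqi.indicator measurableSet_Ioi
  have hlc : HasCompactSupport l := hqc.mono (support_indicator.trans_subset inter_subset_right)
  have hrc : HasCompactSupport r := hqc.mono (support_indicator.trans_subset inter_subset_right)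
  have hsplit : q = l + r := by
    rw [← indicator_self_add_compl (Iic (0 : ℝ)) q, compl_Iic]
  have hl : (fun x : ℝ => laplace l x) =O[𝓟 (Ici 0)] fun _ => (1 : ℝ) := by
    simpa using laplace_isBigO_of_support_subset_Iic hli (c := 0) support_indicator_subset
  have hr : (fun x : ℝ => laplace r x) =O[𝓟 (Ici 0)] fun _ => (1 : ℝ) := by
    refine (hbd.sub hl).congr_left fun x => ?_
    rw [hsplit, laplace_add hli hlc hri hrc, Pi.add_apply, add_sub_cancel_left]
  intro t ht
  by_contra htpos
  have hrq : r =ᶠ[𝓝 t] q := by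
    filter_upwards [Ioi_mem_nhds (not_le.1 htpos)] with s hs using indicator_of_mem hs q
  refine ht (hrq.eq_of_nhds ▸ apply_eq_zero_of_laplace_isBigO_one hri hrc ?_ hr
    (hq.continuousAt.congr hrq.symm))
  exact support_indicator_subset.trans Ioi_subset_Ici_self

lemma support_subset_Iic_iff_laplace_isBigO [CompleteSpace E] (hq : Continuous q)
    (hqc : HasCompactSupport q) :
    support q ⊆ Iic c ↔ (fun x : ℝ => laplace q x) =O[𝓟 (Ici 0)] fun x => Real.exp (c * x) := by
  refine ⟨laplace_isBigO_of_support_subset_Iic (hq.integrable_of_hasCompactSupport hqc),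
    fun hbd t ht => ?_⟩
  have hshift : support (fun t => q (t + c)) ⊆ Iic 0 := by
    refine support_subset_Iic_zero_of_laplace_isBigO_one (by fun_prop)
      (hqc.comp_homeomorph (Homeomorph.addRight c)) ?_
    have hexp : (fun x : ℝ => Complex.exp (-(c * x))) =O[𝓟 (Ici 0)] fun x => Real.exp (-(c * x)) :=
      .of_norm_eventuallyLE (.of_forall fun x => by simp [Complex.norm_exp])
    simp only [laplace_comp_add_right]
    refine (hexp.smul hbd).congr_right fun x => ?_
    rw [smul_eq_mul, ← Real.exp_add, neg_add_cancel, Real.exp_zero]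
  have htc : t - c ∈ Iic 0 := hshift (by simpa using ht)
  exact sub_nonpos.1 (mem_Iic.1 htc)

end Laplace

section LineTitchmarsh

open Asymptotics Filter Function Topology
open scoped Convolution
open Complex (ofReal continuous_ofReal)
open ContinuousLinearMap (mul)

variable {φ ψ : ℝ → ℂ} {c : ℝ}

lemma laplace_convolution (hφ : Integrable φ) (hφc : HasCompactSupport φ) (hψ : Integrable ψ)
    (hψc : HasCompactSupport ψ) : laplace (φ ⋆[mul ℂ ℂ] ψ) = laplace φ * laplace ψ := by
  ext z
  have hconv := integral_convolution (mul ℂ ℂ) (integrable_cexp_smul hφ hφc z)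
    (integrable_cexp_smul hψ hψc z)
  simp only [ContinuousLinearMap.mul_apply', convolution_mul] at hconv
  rw [Pi.mul_apply, laplace, laplace, laplace, ← hconv]
  congr 1 with x
  rw [convolution_mul, ← integral_smul]
  congr 1 with t
  simp only [smul_eq_mul, Complex.ofReal_sub, mul_sub, Complex.exp_sub]
  field_simp

lemma ofReal_mul_convolution (hl : ConvolutionExists (ofReal * φ) ψ (mul ℂ ℂ))
    (hr : ConvolutionExists φ (ofReal * ψ) (mul ℂ ℂ)) :
    ofReal * (φ ⋆[mul ℂ ℂ] ψ) =
      (ofReal * φ) ⋆[mul ℂ ℂ] ψ + φ ⋆[mul ℂ ℂ] (ofReal * ψ) := by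
  ext x
  have hint := integral_add (hl x) (hr x)
  simp only [ContinuousLinearMap.mul_apply', Pi.mul_apply] at hint
  simp only [Pi.mul_apply, Pi.add_apply, convolution_mul]
  rw [← integral_const_mul, ← hint]
  congr 1 with t
  push_cast
  ring

lemma support_convolution_subset_Iic_iff (hφ : Continuous φ) (hφc : HasCompactSupport φ)
    (hψ : Continuous ψ) (hψc : HasCompactSupport ψ) :
    support (φ ⋆[mul ℂ ℂ] ψ) ⊆ Iic c ↔
      (fun x : ℝ => laplace φ x * laplace ψ x) =O[𝓟 (Ici 0)] fun x => Real.exp (c * x) := by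
  rw [support_subset_Iic_iff_laplace_isBigO
    (hψc.continuous_convolution_right _ hφ.locallyIntegrable hψ) (hφc.convolution _ hψc),
    laplace_convolution (hφ.integrable_of_hasCompactSupport hφc) hφc
      (hψ.integrable_of_hasCompactSupport hψc) hψc]
  rfl

lemma laplace_ofReal_mul_convolution (hφ : Continuous φ) (hφc : HasCompactSupport φ)
    (hψ : Continuous ψ) (hψc : HasCompactSupport ψ) :
    laplace (ofReal * (φ ⋆[mul ℂ ℂ] ψ)) =
      laplace (ofReal * φ) * laplace ψ + laplace φ * laplace (ofReal * ψ) := by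
  have hXφ : Continuous (ofReal * φ) := continuous_ofReal.mul hφ
  have hXψ : Continuous (ofReal * ψ) := continuous_ofReal.mul hψ
  have hXφc : HasCompactSupport (ofReal * φ) := hφc.mul_left
  have hXψc : HasCompactSupport (ofReal * ψ) := hψc.mul_left
  have hφi : Integrable φ := hφ.integrable_of_hasCompactSupport hφc
  have hψi : Integrable ψ := hψ.integrable_of_hasCompactSupport hψc
  have hXφi : Integrable (ofReal * φ) := hXφ.integrable_of_hasCompactSupport hXφc
  have hXψi : Integrable (ofReal * ψ) := hXψ.integrable_of_hasCompactSupport hXψc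
  rw [ofReal_mul_convolution (hψc.convolutionExists_right _ hXφ.locallyIntegrable hψ)
      (hXψc.convolutionExists_right _ hφ.locallyIntegrable hXψ),
    laplace_add (hXφi.integrable_convolution _ hψi) (hXφc.convolution _ hψc)
      (hφi.integrable_convolution _ hXψi) (hφc.convolution _ hXψc),
    laplace_convolution hXφi hXφc hψi hψc, laplace_convolution hφi hφc hXψi hXψc]

lemma exp_mul_exp_isBigO_sq {a b m : ℝ} (h : a + b ≤ 2 * m) :
    (fun x => Real.exp (a * x) * Real.exp (b * x)) =O[𝓟 (Ici 0)]
      ((fun x => Real.exp (m * x)) ^ 2) := by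
  refine IsBigO.of_bound 1 (eventually_principal.2 fun x (hx : 0 ≤ x) => ?_)
  rw [Pi.pow_apply, ← Real.exp_add, ← Real.exp_nat_mul, Real.norm_of_nonneg (exp_pos _).le,
    Real.norm_of_nonneg (exp_pos _).le, one_mul, Real.exp_le_exp, ← add_mul]
  push_cast
  rw [← mul_assoc]
  gcongr

/-- Writing `F` and `G` for the transforms of `φ` and `ψ`, this is the identity
`(F'G)² = (FG)' · F'G - FG · F'G'` read off in terms of exponential growth. -/
lemma support_ofReal_mul_convolution_subset_Iic {a b d m : ℝ}
    (hφ : Continuous φ) (hφc : HasCompactSupport φ) (hψ : Continuous ψ) (hψc : HasCompactSupport ψ)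
    (ha : support (φ ⋆[mul ℂ ℂ] ψ) ⊆ Iic a)
    (hb : support ((ofReal * φ) ⋆[mul ℂ ℂ] ψ) ⊆ Iic b)
    (hd : support ((ofReal * φ) ⋆[mul ℂ ℂ] (ofReal * ψ)) ⊆ Iic d)
    (hab : a + b ≤ 2 * m) (had : a + d ≤ 2 * m) :
    support ((ofReal * φ) ⋆[mul ℂ ℂ] ψ) ⊆ Iic m := by
  have hXφ : Continuous (ofReal * φ) := continuous_ofReal.mul hφ
  have hXψ : Continuous (ofReal * ψ) := continuous_ofReal.mul hψ
  have hXφc : HasCompactSupport (ofReal * φ) := hφc.mul_left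
  have hXψc : HasCompactSupport (ofReal * ψ) := hψc.mul_left
  have hderiv : (fun x : ℝ => laplace (ofReal * φ) x * laplace ψ x +
      laplace φ x * laplace (ofReal * ψ) x) =O[𝓟 (Ici 0)] fun x => Real.exp (a * x) := by
    have hX : Integrable (ofReal * (φ ⋆[mul ℂ ℂ] ψ)) :=
      integrable_continuous_smul continuous_ofReal
        ((hφ.integrable_of_hasCompactSupport hφc).integrable_convolution _
          (hψ.integrable_of_hasCompactSupport hψc)) (hφc.convolution _ hψc)
    simpa only [laplace_ofReal_mul_convolution hφ hφc hψ hψc, Pi.add_apply, Pi.mul_apply] using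
      laplace_isBigO_of_support_subset_Iic hX ((support_mul_subset_right _ _).trans ha)
  rw [support_convolution_subset_Iic_iff hφ hφc hψ hψc] at ha
  rw [support_convolution_subset_Iic_iff hXφ hXφc hψ hψc] at hb ⊢
  rw [support_convolution_subset_Iic_iff hXφ hXφc hXψ hXψc] at hd
  refine IsBigO.of_pow two_ne_zero ((((hderiv.mul hb).trans (exp_mul_exp_isBigO_sq hab)).sub
    ((ha.mul hd).trans (exp_mul_exp_isBigO_sq had))).congr_left fun x => ?_)
  rw [Pi.pow_apply]
  ring

lemma succ_le_self_of_bddAbove {s : ℕ → ℝ} (hs : BddAbove (range s))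
    (h : ∀ m, s (m + 1) ≤ s m ∨ 2 * s (m + 1) ≤ s m + s (m + 2)) (m : ℕ) : s (m + 1) ≤ s m := by
  obtain ⟨B, hB⟩ := hs
  by_contra! hm
  have hincr (k : ℕ) : s (m + 1) - s m ≤ s (m + k + 1) - s (m + k) := by
    induction k with
    | zero => rfl
    | succ k ih => grind
  have hlinear (k : ℕ) : s m + k * (s (m + 1) - s m) ≤ s (m + k) := by
    induction k with
    | zero => simp
    | succ k ih =>
      rw [← add_assoc]
      push_cast
      linarith [hincr k]
  obtain ⟨k, hk⟩ := exists_nat_gt ((B - s m) / (s (m + 1) - s m))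
  rw [div_lt_iff₀ (by linarith)] at hk
  linarith [hlinear k, hB (mem_range_self (m + k))]

lemma subset_Iic_of_halving {U : ℕ → Set ℝ} {B : ℝ} (hB : ∀ m, U m ⊆ Iic B) (h0 : U 0 ⊆ Iic c)
    (hstep : ∀ {m a b d r}, U m ⊆ Iic a → U (m + 1) ⊆ Iic b → U (m + 2) ⊆ Iic d →
      a + b ≤ 2 * r → a + d ≤ 2 * r → U (m + 1) ⊆ Iic r) (m : ℕ) : U m ⊆ Iic c := by
  set s : ℕ → ℝ := fun m => sSup (insert c (U m))
  have hbdd (m : ℕ) : BddAbove (insert c (U m)) := ((bddAbove_Iic (a := B)).mono (hB m)).insert c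
  have s_le {m : ℕ} {r : ℝ} (hr : c ≤ r) (h : U m ⊆ Iic r) : s m ≤ r :=
    csSup_le (insert_nonempty _ _) (insert_subset hr h)
  have c_le (m : ℕ) : c ≤ s m := le_csSup (hbdd m) (mem_insert _ _)
  have subset_s (m : ℕ) : U m ⊆ Iic (s m) := fun t ht =>
    le_csSup (hbdd m) (mem_insert_of_mem _ ht)
  have hconvex (m : ℕ) : s (m + 1) ≤ s m ∨ 2 * s (m + 1) ≤ s m + s (m + 2) := by
    by_contra! hlt
    have hmax : max ((s m + s (m + 1)) / 2) ((s m + s (m + 2)) / 2) < s (m + 1) :=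
      max_lt (by linarith) (by linarith)
    obtain ⟨r, hr, hrs⟩ := exists_between hmax
    have hrl := (le_max_left _ _).trans_lt hr
    have hrr := (le_max_right _ _).trans_lt hr
    exact hrs.not_ge (s_le (by linarith [c_le m]) (hstep (subset_s m) (subset_s (m + 1))
      (subset_s (m + 2)) (by linarith) (by linarith)))
  have hanti : Antitone s := antitone_nat_of_succ_le <| succ_le_self_of_bddAbove
    ⟨max c B, forall_mem_range.2 fun m => s_le (le_max_left c B)
      ((hB m).trans (Iic_subset_Iic.2 (le_max_right c B)))⟩ hconvex
  exact (subset_s m).trans (Iic_subset_Iic.2 ((hanti m.zero_le).trans (s_le le_rfl h0)))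

lemma convolution_mul_comm {G : Type*} [AddCommGroup G] [MeasurableSpace G] [MeasurableAdd G]
    [MeasurableNeg G] {μ : Measure G} [μ.IsAddLeftInvariant] [μ.IsNegInvariant] (φ ψ : G → ℂ) :
    φ ⋆[mul ℂ ℂ, μ] ψ = ψ ⋆[mul ℂ ℂ, μ] φ := by
  ext x
  rw [convolution_mul_swap, convolution_mul]
  simp only [mul_comm]

lemma support_ofReal_pow_succ_mul_convolution_subset_Iic {a b d m : ℝ} {i j : ℕ}
    (hφ : Continuous φ) (hφc : HasCompactSupport φ) (hψ : Continuous ψ) (hψc : HasCompactSupport ψ)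
    (ha : support ((ofReal ^ i * φ) ⋆[mul ℂ ℂ] (ofReal ^ j * ψ)) ⊆ Iic a)
    (hb : support ((ofReal ^ (i + 1) * φ) ⋆[mul ℂ ℂ] (ofReal ^ j * ψ)) ⊆ Iic b)
    (hd : support ((ofReal ^ (i + 1) * φ) ⋆[mul ℂ ℂ] (ofReal ^ (j + 1) * ψ)) ⊆ Iic d)
    (hab : a + b ≤ 2 * m) (had : a + d ≤ 2 * m) :
    support ((ofReal ^ (i + 1) * φ) ⋆[mul ℂ ℂ] (ofReal ^ j * ψ)) ⊆ Iic m := by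
  simp only [pow_succ', mul_assoc] at hb hd ⊢
  exact support_ofReal_mul_convolution_subset_Iic ((continuous_ofReal.pow i).mul hφ) hφc.mul_left
    ((continuous_ofReal.pow j).mul hψ) hψc.mul_left ha hb hd hab had

lemma support_ofReal_pow_mul_convolution_subset_Iic (hφ : Continuous φ) (hφc : HasCompactSupport φ)
    (hψ : Continuous ψ) (hψc : HasCompactSupport ψ) (hc : support (φ ⋆[mul ℂ ℂ] ψ) ⊆ Iic c)
    (k : ℕ) : support ((ofReal ^ k * φ) ⋆[mul ℂ ℂ] ψ) ⊆ Iic c := by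
  set S : ℕ × ℕ → Set ℝ := fun p =>
    support ((ofReal ^ p.1 * φ) ⋆[mul ℂ ℂ] (ofReal ^ p.2 * ψ)) with hS
  set U : ℕ → Set ℝ := fun m => ⋃ p ∈ {p : ℕ × ℕ | p.1 + p.2 = m}, S p with hU
  have subset_U {i j m : ℕ} (hij : i + j = m) : S (i, j) ⊆ U m := subset_biUnion_of_mem (u := S) hij
  obtain ⟨B, hB⟩ : ∃ B, ∀ m, U m ⊆ Iic B := by
    obtain ⟨B, hB⟩ := (hφc.isCompact.add hψc.isCompact).bddAbove
    refine ⟨B, fun m => iUnion₂_subset fun p _ => ?_⟩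
    refine (support_convolution_subset _).trans fun t ht => hB (add_subset_add ?_ ?_ ht)
    exacts [(support_mul_subset_right _ _).trans (subset_tsupport φ),
      (support_mul_subset_right _ _).trans (subset_tsupport ψ)]
  have hstep {m : ℕ} {a b d r : ℝ} (ha : U m ⊆ Iic a) (hb : U (m + 1) ⊆ Iic b)
      (hd : U (m + 2) ⊆ Iic d) (hab : a + b ≤ 2 * r) (had : a + d ≤ 2 * r) :
      U (m + 1) ⊆ Iic r := by
    refine iUnion₂_subset ?_
    rintro ⟨_ | i, j⟩ (hij : _ + j = m + 1)
    · obtain rfl : j = m + 1 := by omega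
      have ha' := (subset_U (zero_add m)).trans ha
      have hb' := (subset_U (zero_add (m + 1))).trans hb
      have hd' := (subset_U (show 1 + (m + 1) = m + 2 by omega)).trans hd
      simp only [hS, convolution_mul_comm (_ * φ)] at ha' hb' hd' ⊢
      exact support_ofReal_pow_succ_mul_convolution_subset_Iic hψ hψc hφ hφc ha' hb' hd' hab had
    · exact support_ofReal_pow_succ_mul_convolution_subset_Iic hφ hφc hψ hψc
        ((subset_U (by omega)).trans ha) ((subset_U (by omega)).trans hb)
        ((subset_U (show i + 1 + (j + 1) = m + 2 by omega)).trans hd) hab had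
  have h0 : U 0 ⊆ Iic c := by
    simpa [hU, hS, Prod.ext_iff] using hc
  simpa [hS] using (subset_U (add_zero k)).trans (subset_Iic_of_halving hB h0 hstep k)

lemma integral_polynomial_smul_eq_zero {E : Type*} [NormedAddCommGroup E] [NormedSpace ℝ E]
    {u : ℝ → E} (hu : Continuous u) (huc : HasCompactSupport u)
    (h : ∀ k : ℕ, ∫ t, t ^ k • u t = 0) (p : Polynomial ℝ) : ∫ t, p.eval t • u t = 0 := by
  have hint (k : ℕ) : Integrable fun t => t ^ k • u t :=
    ((continuous_pow k).smul hu).integrable_of_hasCompactSupport huc.smul_left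
  simp only [Polynomial.eval_eq_sum_range, Finset.sum_smul, mul_smul]
  rw [integral_finsetSum _ fun k _ => (hint k).fun_smul (p.coeff k)]
  simp only [integral_smul, h, smul_zero, Finset.sum_const_zero]

lemma integral_continuous_smul_eq_zero {E : Type*} [NormedAddCommGroup E] [NormedSpace ℝ E]
    {u : ℝ → E} (hu : Continuous u) (huc : HasCompactSupport u)
    (h : ∀ k : ℕ, ∫ t, t ^ k • u t = 0) {g : ℝ → ℝ} (hg : Continuous g) :
    ∫ t, g t • u t = 0 := by
  obtain ⟨R, hR⟩ := huc.isCompact.isBounded.exists_norm_le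
  have happrox (ε : ℝ) (hε : 0 < ε) : ‖∫ t, g t • u t‖ ≤ ε * ∫ t, ‖u t‖ := by
    obtain ⟨p, hp⟩ := exists_polynomial_near_of_continuousOn (-R) R g hg.continuousOn ε hε
    have hgp : ∫ t, g t • u t = ∫ t, (g t - p.eval t) • u t := by
      simp only [sub_smul]
      rw [integral_sub, integral_polynomial_smul_eq_zero hu huc h, sub_zero]
      exacts [(hg.smul hu).integrable_of_hasCompactSupport huc.smul_left,
        (p.continuous.smul hu).integrable_of_hasCompactSupport huc.smul_left]
    rw [hgp, ← integral_const_mul]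
    refine norm_integral_le_of_norm_le
      ((hu.integrable_of_hasCompactSupport huc).norm.const_mul ε) (ae_of_all _ fun t => ?_)
    rw [norm_smul, norm_sub_rev]
    by_cases ht : u t = 0
    · simp [ht]
    · gcongr
      exact (hp t (abs_le.1 (hR t (subset_tsupport u ht)))).le
  refine norm_le_zero_iff.1 (ge_of_tendsto (f := fun ε : ℝ => ε * ∫ t, ‖u t‖) (x := 𝓝[>] 0) ?_ ?_)
  · exact tendsto_nhdsWithin_of_tendsto_nhds
      ((continuous_mul_const (∫ t, ‖u t‖)).tendsto' 0 0 (zero_mul _))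
  · filter_upwards [self_mem_nhdsWithin] with ε hε using happrox ε hε

lemma eq_zero_of_forall_integral_pow_smul_eq_zero {E : Type*} [NormedAddCommGroup E]
    [NormedSpace ℝ E] [CompleteSpace E] {u : ℝ → E} (hu : Continuous u) (huc : HasCompactSupport u)
    (h : ∀ k : ℕ, ∫ t, t ^ k • u t = 0) : u = 0 :=
  (hu.ae_eq_iff_eq volume continuous_zero).1 <|
    ae_eq_zero_of_integral_contDiff_smul_eq_zero hu.locallyIntegrable fun _ hg _ =>
      integral_continuous_smul_eq_zero hu huc h hg.continuous

theorem support_add_support_subset_Iic_of_convolution (hφ : Continuous φ)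
    (hφc : HasCompactSupport φ) (hψ : Continuous ψ) (hψc : HasCompactSupport ψ)
    (hc : support (φ ⋆[mul ℂ ℂ] ψ) ⊆ Iic c) : support φ + support ψ ⊆ Iic c := by
  rintro _ ⟨x, hx, y, hy, rfl⟩
  by_contra hxy
  have hzero : (fun t => φ t * ψ (x + y - t)) = 0 := by
    refine eq_zero_of_forall_integral_pow_smul_eq_zero (by fun_prop) hφc.mul_right fun k => ?_
    have hmoment : ((ofReal ^ k * φ) ⋆[mul ℂ ℂ] ψ) (x + y) = 0 := notMem_support.1 fun hmem =>
      hxy (support_ofReal_pow_mul_convolution_subset_Iic hφ hφc hψ hψc hc k hmem)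
    simpa [convolution_mul, mul_assoc] using hmoment
  have hprod : φ x * ψ y = 0 := by simpa using congrFun hzero x
  exact mul_ne_zero hx hy hprod

end LineTitchmarsh

section Windows

open Function Topology
open scoped Convolution
open ContinuousLinearMap (mul)

lemma continuous_indicator_of_eqOn {X E : Type*} [TopologicalSpace X] [TopologicalSpace E] [Zero E]
    {s u : Set X} (hs : IsClosed s) (hu : IsOpen u) (hsu : s ⊆ u) {F : X → E} (hF : Continuous F)
    (heq : EqOn (s.indicator F) F u) : Continuous (s.indicator F) := by
  refine continuous_iff_continuousAt.2 fun x => ?_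
  by_cases hx : x ∈ s
  · exact hF.continuousAt.congr (heq.eventuallyEq_of_mem (hu.mem_nhds (hsu hx))).symm
  · have hzero : s.indicator F =ᶠ[𝓝 x] fun _ => 0 := by
      filter_upwards [hs.isOpen_compl.mem_nhds hx] with y hy using indicator_of_notMem hy F
    exact continuousAt_const.congr hzero.symm

variable {F G : ℝ → ℂ} {a b a' b' p : ℝ}

lemma indicator_Icc_eqOn (hF : support F ∩ Ioo (b - p) (a + p) ⊆ Icc a b) :
    EqOn ((Icc a b).indicator F) F (Ioo (b - p) (a + p)) := by
  intro x hx
  by_cases h0 : F x = 0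
  · rw [h0, indicator_apply_eq_zero]
    exact fun _ => h0
  · exact indicator_of_mem (hF ⟨h0, hx⟩) F

lemma convolution_indicator_Icc (hF : support F ∩ Ioo (b - p) (a + p) ⊆ Icc a b)
    (hG : support G ∩ Ioo (b' - p) (a' + p) ⊆ Icc a' b') (hab : a ≤ b) (hbp : b - a < p)
    {x : ℝ} (hx : x ∈ Ioo (b + b' - p) (a + a' + p)) :
    ((Icc a b).indicator F ⋆[mul ℂ ℂ] (Icc a' b').indicator G) x =
      ∫ t in a..(a + p), F t * G (x - t) := by
  have hwindow (t : ℝ) (ht : t ∈ Icc a b) : (Icc a' b').indicator G (x - t) = G (x - t) :=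
    indicator_Icc_eqOn hG ⟨by linarith [hx.1, ht.2], by linarith [hx.2, ht.1]⟩
  calc ((Icc a b).indicator F ⋆[mul ℂ ℂ] (Icc a' b').indicator G) x
      = ∫ t, (Icc a b).indicator (fun t => F t * G (x - t)) t := by
        rw [convolution_mul]
        congr 1 with t
        by_cases ht : t ∈ Icc a b
        · simp only [indicator_of_mem ht, hwindow t ht]
        · simp only [indicator_of_notMem ht, zero_mul]
    _ = ∫ t in Ioc a b, F t * G (x - t) := by
        rw [integral_indicator measurableSet_Icc, integral_Icc_eq_integral_Ioc]
    _ = ∫ t in Ioo a (a + p), F t * G (x - t) := by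
        refine (setIntegral_eq_of_subset_of_forall_sdiff_eq_zero measurableSet_Ioo ?_ ?_).symm
        · exact fun t ht => ⟨ht.1, by linarith [ht.2]⟩
        · rintro t ⟨ht, htb⟩
          have hFt : F t = 0 := by
            by_contra h0
            exact htb ⟨ht.1, (hF ⟨h0, by linarith [ht.1], ht.2⟩).2⟩
          rw [hFt, zero_mul]
    _ = ∫ t in a..(a + p), F t * G (x - t) := by
        rw [intervalIntegral.integral_of_le (by linarith), integral_Ioc_eq_integral_Ioo]

lemma mul_eq_zero_of_forall_intervalIntegral_eq_zero (hFc : Continuous F) (hGc : Continuous G)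
    (hF : support F ∩ Ioo (b - p) (a + p) ⊆ Icc a b)
    (hG : support G ∩ Ioo (b' - p) (a' + p) ⊆ Icc a' b') (hab : a ≤ b) (hab' : a' ≤ b')
    (hlen : b - a + (b' - a') < p) {c : ℝ} (hc : a + a' ≤ c)
    (hint : ∀ x ∈ Ioo c (a + a' + p), ∫ t in a..(a + p), F t * G (x - t) = 0)
    {x y : ℝ} (hx : x ∈ Ioo (b - p) (a + p)) (hy : y ∈ Ioo (b' - p) (a' + p)) (hxy : c < x + y) :
    F x * G y = 0 := by
  set φ := (Icc a b).indicator F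
  set ψ := (Icc a' b').indicator G
  have hφ : Continuous φ := continuous_indicator_of_eqOn isClosed_Icc isOpen_Ioo
    (Icc_subset_Ioo (by linarith) (by linarith)) hFc (indicator_Icc_eqOn hF)
  have hψ : Continuous ψ := continuous_indicator_of_eqOn isClosed_Icc isOpen_Ioo
    (Icc_subset_Ioo (by linarith) (by linarith)) hGc (indicator_Icc_eqOn hG)
  have hφc : HasCompactSupport φ := .of_support_subset_isCompact isCompact_Icc
    support_indicator_subset
  have hψc : HasCompactSupport ψ := .of_support_subset_isCompact isCompact_Icc
    support_indicator_subset
  have hconv : support (φ ⋆[mul ℂ ℂ] ψ) ⊆ Iic c := by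
    intro s hs
    by_contra! hcs
    obtain ⟨t, ht, t', ht', rfl⟩ := support_convolution_subset _ hs
    have htb := (support_indicator_subset ht).2
    have htb' := (support_indicator_subset ht').2
    refine hs ((convolution_indicator_Icc hF hG hab (by linarith) ⟨?_, ?_⟩).trans (hint _ ⟨?_, ?_⟩))
    all_goals simp only [mem_Iic, not_le] at *; linarith
  rw [← indicator_Icc_eqOn hF hx, ← indicator_Icc_eqOn hG hy]
  by_contra h0
  exact hxy.not_ge (support_add_support_subset_Iic_of_convolution hφ hφc hψ hψc hconv
    (add_mem_add (left_ne_zero_of_mul h0) (right_ne_zero_of_mul h0)))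

end Windows

section Twisted

open Function
open scoped Convolution
open ContinuousLinearMap (mul)

variable {G : Type*} [AddCommGroup G]

/-- The sum of the translates of `f` by `0, h, …, (n - 1) • h`, weighted by the powers of `α`: the
`F_α` of the theorem when `h` is the class of `2π / n`. When `n • h = 0` and `α ^ n = 1` it is an
eigenfunction of translation by `h`. -/
def twistedSum (n : ℕ) (h : G) (α : ℂ) (f : G → ℂ) (x : G) : ℂ :=
  ∑ k ∈ Finset.range n, α ^ k * f (x - k • h)

/-- The smallest set containing `A` that is invariant under translation by `±h`. It replaces
`R_n(A)`, which it equals when `h` has order `n`. -/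
def periodicHull (h : G) (A : Set G) : Set G :=
  (AddSubgroup.zmultiples h : Set G) + A

variable {n : ℕ} {h : G} {α : ℂ} {f g : G → ℂ}

lemma periodicHull_mono {A B : Set G} (hAB : A ⊆ B) : periodicHull h A ⊆ periodicHull h B :=
  add_subset_add_left hAB

lemma add_mem_periodicHull_iff {A : Set G} {z : G} (hz : z ∈ AddSubgroup.zmultiples h) {x : G} :
    z + x ∈ periodicHull h A ↔ x ∈ periodicHull h A := by
  constructor
  · rintro ⟨w, hw, a, ha, hwa⟩
    exact ⟨-z + w, add_mem (neg_mem hz) hw, a, ha,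
      (add_assoc _ _ _).trans (neg_add_eq_of_eq_add hwa)⟩
  · rintro ⟨w, hw, a, ha, rfl⟩
    exact ⟨z + w, add_mem hz hw, a, ha, add_assoc z w a⟩

lemma isClosed_periodicHull [TopologicalSpace G] [ContinuousAdd G] [T2Space G]
    (hh : IsOfFinAddOrder h) {A : Set G} (hA : IsCompact A) : IsClosed (periodicHull h A) :=
  (hh.finite_zmultiples.isCompact.add hA).isClosed

lemma twistedSum_add (hn : n • h = 0) (hα : α ^ n = 1) (f : G → ℂ) (x : G) :
    twistedSum n h α f (x + h) = α * twistedSum n h α f x := by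
  have hterm (k : ℕ) : α ^ (k + 1) * f (x + h - (k + 1) • h) = α * (α ^ k * f (x - k • h)) := by
    rw [pow_succ', mul_assoc, succ_nsmul, add_sub_add_right_eq_sub]
  have hshift := (Finset.sum_range_succ (fun k => α ^ k * f (x + h - k • h)) n).symm.trans
    (Finset.sum_range_succ' _ n)
  simp only [hn, hα, hterm, pow_zero, zero_smul, ← Finset.mul_sum] at hshift
  exact add_right_cancel hshift

lemma twistedSum_eq_zero_iff_of_mem_zmultiples (hn : n • h = 0) (hα : α ^ n = 1) {z : G}
    (hz : z ∈ AddSubgroup.zmultiples h) (f : G → ℂ) (x : G) :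
    twistedSum n h α f (z + x) = 0 ↔ twistedSum n h α f x = 0 := by
  rcases eq_or_ne n 0 with rfl | hn0
  · simp only [twistedSum, Finset.range_zero, Finset.sum_empty]
  have hα0 : α ≠ 0 := (IsUnit.of_pow_eq_one hα hn0).ne_zero
  have hper : Periodic (fun x => twistedSum n h α f x = 0) h := fun x => by
    simp only [twistedSum_add hn hα, mul_eq_zero, hα0, false_or]
  obtain ⟨m, rfl⟩ := AddSubgroup.mem_zmultiples_iff.1 hz
  rw [add_comm]
  exact (hper.zsmul m x).to_iff

lemma support_twistedSum_subset {A : Set G} (hf : support f ⊆ periodicHull h A) (n : ℕ) (α : ℂ) :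
    support (twistedSum n h α f) ⊆ periodicHull h A := by
  intro x hx
  obtain ⟨k, -, hk⟩ := Finset.exists_ne_zero_of_sum_ne_zero hx
  rw [← add_mem_periodicHull_iff (neg_mem (nsmul_mem (AddSubgroup.mem_zmultiples h) k)),
    neg_add_eq_sub]
  exact hf (right_ne_zero_of_mul hk)

lemma continuous_twistedSum [TopologicalSpace G] [IsTopologicalAddGroup G] (hf : Continuous f)
    (n : ℕ) (h : G) (α : ℂ) : Continuous (twistedSum n h α f) := by
  unfold twistedSum
  fun_prop

lemma support_subset_iUnion_support_twistedSum {ζ : ℂ} (hζ : IsPrimitiveRoot ζ n) (hn : n ≠ 0)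
    (h : G) (f : G → ℂ) : support f ⊆ ⋃ l < n, support (twistedSum n h (ζ ^ l) f) := by
  intro x hx
  by_contra hmem
  simp only [mem_iUnion, mem_support, not_exists, not_not] at hmem
  have hinj : Injective fun l : Fin n => ζ ^ (l : ℕ) := fun l m hlm =>
    Fin.ext (hζ.pow_inj l.2 m.2 hlm)
  have hcoeff := Matrix.eq_zero_of_forall_index_sum_pow_mul_eq_zero
    (v := fun k : Fin n => f (x - (k : ℕ) • h)) hinj fun l => by
      rw [Fin.sum_univ_eq_sum_range fun k => (ζ ^ (l : ℕ)) ^ k * f (x - k • h)]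
      exact hmem l l.2
  exact hx (by simpa using congrFun hcoeff ⟨0, hn.bot_lt⟩)

variable [MeasurableSpace G] {μ : Measure G}

lemma convolution_twistedSum (hfg : ConvolutionExists f g (mul ℂ ℂ) μ) (n : ℕ) (h : G) (α : ℂ) :
    f ⋆[mul ℂ ℂ, μ] twistedSum n h α g = twistedSum n h α (f ⋆[mul ℂ ℂ, μ] g) := by
  ext x
  simp only [twistedSum, convolution_mul, Finset.mul_sum]
  rw [integral_finsetSum]
  · refine Finset.sum_congr rfl fun k _ => ?_
    rw [← integral_const_mul]
    congr 1 with t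
    rw [sub_right_comm]
    ring
  · intro k _
    refine ((hfg (x - k • h)).const_mul (α ^ k)).congr (ae_of_all _ fun t => ?_)
    simp only [ContinuousLinearMap.mul_apply', sub_right_comm x t]
    ring

lemma twistedSum_convolution [MeasurableAdd G] [MeasurableNeg G] [μ.IsAddLeftInvariant]
    [μ.IsNegInvariant] (hgf : ConvolutionExists g f (mul ℂ ℂ) μ) (n : ℕ) (h : G) (α : ℂ) :
    twistedSum n h α f ⋆[mul ℂ ℂ, μ] g = twistedSum n h α (f ⋆[mul ℂ ℂ, μ] g) := by
  rw [convolution_mul_comm, convolution_twistedSum hgf, convolution_mul_comm]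

lemma twistedSum_convolution_twistedSum [TopologicalSpace G] [IsTopologicalAddGroup G]
    [CompactSpace G] [BorelSpace G] [IsLocallyFiniteMeasure μ] [μ.IsAddLeftInvariant]
    [μ.IsNegInvariant] (hf : Continuous f) (hg : Continuous g) (n : ℕ) (h : G) (α : ℂ) :
    twistedSum n h α f ⋆[mul ℂ ℂ, μ] twistedSum n h α g =
      twistedSum n h α (twistedSum n h α (f ⋆[mul ℂ ℂ, μ] g)) := by
  have hexists {u v : G → ℂ} (hu : Continuous u) (hv : Continuous v) :
      ConvolutionExists u v (mul ℂ ℂ) μ :=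
    (HasCompactSupport.of_compactSpace v).convolutionExists_right _ hu.locallyIntegrable hv
  rw [twistedSum_convolution (hexists (continuous_twistedSum hg n h α) hf),
    convolution_twistedSum (hexists hf hg)]

end Twisted

section Circle

open Function Topology
open scoped Convolution
open ContinuousLinearMap (mul)

variable {T : ℝ} {n : ℕ}

lemma nsmul_coe_period_div (T : ℝ) (hn : n ≠ 0) : n • ((T / n : ℝ) : AddCircle T) = 0 := by
  rw [← AddCircle.coe_nsmul, nsmul_eq_mul, mul_div_cancel₀ T (Nat.cast_ne_zero.2 hn),
    AddCircle.coe_period]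

lemma isOfFinAddOrder_coe_period_div (T : ℝ) (hn : n ≠ 0) :
    IsOfFinAddOrder ((T / n : ℝ) : AddCircle T) :=
  isOfFinAddOrder_iff_nsmul_eq_zero.2 ⟨n, hn.bot_lt, nsmul_coe_period_div T hn⟩

lemma eq_zero_of_coe_mem_zmultiples (hn : n ≠ 0) {t : ℝ} (ht : |t| < T / n)
    (hmem : (t : AddCircle T) ∈ AddSubgroup.zmultiples ((T / n : ℝ) : AddCircle T)) : t = 0 := by
  have hn0 : (0 : ℝ) < n := Nat.cast_pos.2 hn.bot_lt
  have hnt : ((n * t : ℝ) : AddCircle T) = 0 := by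
    obtain ⟨m, hm⟩ := AddSubgroup.mem_zmultiples_iff.1 hmem
    rw [← nsmul_eq_mul, AddCircle.coe_nsmul, ← hm, smul_comm, nsmul_coe_period_div T hn, smul_zero]
  obtain ⟨k, hk⟩ := (AddCircle.coe_eq_zero_iff T).1 hnt
  rw [zsmul_eq_mul] at hk
  have hkT : |(k : ℝ)| * |T| < 1 * |T| := by
    rw [← abs_mul, hk, abs_mul, abs_of_pos hn0, one_mul]
    exact ((lt_div_iff₀' hn0).1 ht).trans_le (le_abs_self T)
  have hk1 : |(k : ℝ)| < 1 := lt_of_mul_lt_mul_right hkT (abs_nonneg T)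
  have hk0 : k = 0 := Int.abs_lt_one_iff.1 (by exact_mod_cast hk1)
  rw [hk0, Int.cast_zero, zero_mul] at hk
  exact (mul_eq_zero.1 hk.symm).resolve_left hn0.ne'

lemma mem_Icc_of_coe_mem_periodicHull (hn : n ≠ 0) {a b x : ℝ}
    (hx : x ∈ Ioo (b - T / n) (a + T / n))
    (hmem : (x : AddCircle T) ∈ periodicHull ((T / n : ℝ) : AddCircle T) ((↑) '' Icc a b)) :
    x ∈ Icc a b := by
  obtain ⟨z, hz, _, ⟨t, ht, rfl⟩, hzt⟩ := hmem
  have hxt : x - t = 0 := by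
    refine eq_zero_of_coe_mem_zmultiples hn (T := T) ?_ ?_
    · exact abs_lt.2 ⟨by linarith [hx.1, ht.2], by linarith [hx.2, ht.1]⟩
    · rw [AddCircle.coe_sub, ← eq_sub_of_add_eq hzt]
      exact hz
  rwa [sub_eq_zero.1 hxt]

lemma exists_ne_zero_of_coe_mem_tsupport {E : Type*} [Zero E] {F : AddCircle T → E} {b : ℝ}
    (hb : (b : AddCircle T) ∈ tsupport F) {u : Set ℝ} (hu : u ∈ 𝓝 b) : ∃ x ∈ u, F x ≠ 0 := by
  have hlift : b ∈ closure {t : ℝ | F t ≠ 0} :=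
    QuotientAddGroup.isOpenMap_coe.preimage_closure_subset_closure_preimage hb
  exact mem_closure_iff_nhds.1 hlift u hu

lemma eq_zero_of_coe_mem_tsupport_of_mul_eq_zero {F G : AddCircle T → ℂ} {b c y : ℝ}
    (hb : (b : AddCircle T) ∈ tsupport F) {u : Set ℝ} (hu : u ∈ 𝓝 b) (hy : c < b + y)
    (hFG : ∀ x ∈ u, c < x + y → F x * G y = 0) : G y = 0 := by
  obtain ⟨x, ⟨hxu, hxc⟩, hFx⟩ := exists_ne_zero_of_coe_mem_tsupport hb
    (Filter.inter_mem hu (Ioi_mem_nhds (sub_lt_iff_lt_add.2 hy)))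
  exact (mul_eq_zero.1 (hFG x hxu (sub_lt_iff_lt_add.1 hxc))).resolve_left hFx

variable {f g : AddCircle T → ℂ} {α : ℂ} {a b a' b' c : ℝ}

local notation "τ" => ((T / n : ℝ) : AddCircle T)

lemma support_twistedSum_coe_inter_subset (hn : n ≠ 0)
    (hf : support f ⊆ periodicHull τ ((↑) '' Icc a b)) (α : ℂ) :
    support (fun t : ℝ => twistedSum n τ α f t) ∩ Ioo (b - T / n) (a + T / n) ⊆ Icc a b :=
  fun _ ht => mem_Icc_of_coe_mem_periodicHull hn ht.2 (support_twistedSum_subset hf n α ht.1)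

lemma twistedSum_coe_eq_zero_of_mem_Ioo (hn : n ≠ 0) (hab : a ≤ b)
    (hf : support f ⊆ periodicHull τ ((↑) '' Icc a b)) (α : ℂ) {x : ℝ}
    (hx : x ∈ Ioo b (a + T / n)) : twistedSum n τ α f x = 0 :=
  notMem_support.1 fun hmem => hx.1.not_ge
    (support_twistedSum_coe_inter_subset hn hf α ⟨hmem, by linarith [hx.1, hx.2], hx.2⟩).2

lemma exists_coe_mem_tsupport_twistedSum (hn : n ≠ 0)
    (hsf : support f ⊆ periodicHull τ ((↑) '' Icc a b))
    (hmin : ∀ b' < b, ¬ tsupport f ⊆ periodicHull τ ((↑) '' Icc a b')) :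
    ∃ β : ℂ, β ^ n = 1 ∧ (b : AddCircle T) ∈ tsupport (twistedSum n τ β f) := by
  obtain ⟨ζ, hζ⟩ : ∃ ζ : ℂ, IsPrimitiveRoot ζ n := ⟨_, Complex.isPrimitiveRoot_exp n hn⟩
  have hroot (l : ℕ) : (ζ ^ l) ^ n = 1 := by rw [pow_right_comm, hζ.pow_eq_one, one_pow]
  by_contra! hfar
  have hnear : ∀ᶠ t : ℝ in 𝓝 b, ∀ l < n, twistedSum n τ (ζ ^ l) f t = 0 :=
    (Filter.eventually_all_finite (finite_Iio n)).2 fun l _ =>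
      (AddCircle.continuous_mk' T).continuousAt.eventually
        (notMem_tsupport_iff_eventuallyEq.1 (hfar _ (hroot l)))
  obtain ⟨b', hb', hzero⟩ := exists_Ioc_subset_of_mem_nhds hnear ⟨b - 1, sub_one_lt b⟩
  refine hmin b' hb' (closure_minimal (fun y hy => ?_)
    (isClosed_periodicHull (isOfFinAddOrder_coe_period_div T hn)
      (isCompact_Icc.image (AddCircle.continuous_mk' T))))
  obtain ⟨z, hz, _, ⟨t, ht, rfl⟩, rfl⟩ := hsf hy
  obtain ⟨l, hl, hne⟩ := mem_iUnion₂.1 (support_subset_iUnion_support_twistedSum hζ hn τ f hy)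
  refine ⟨z, hz, t, ⟨t, ⟨ht.1, ?_⟩, rfl⟩, rfl⟩
  by_contra! hbt
  exact hne ((twistedSum_eq_zero_iff_of_mem_zmultiples (nsmul_coe_period_div T hn) (hroot l) hz f
    t).2 (hzero ⟨hbt, ht.2⟩ l hl))

variable [Fact (0 < T)]

lemma integral_eq_nsmul_intervalIntegral_of_periodic {E : Type*} [NormedAddCommGroup E]
    [NormedSpace ℝ E] (hn : n ≠ 0) {W : AddCircle T → E} (hW : Continuous W)
    (hper : Periodic W τ) (a : ℝ) :
    ∫ t, W t = n • ∫ t in a..(a + T / n), W t := by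
  have hlift : Periodic (fun t : ℝ => W t) (T / n) := fun t => hper t
  have hsum := hlift.intervalIntegral_add_zsmul_eq n a fun _ _ =>
    (hW.comp (AddCircle.continuous_mk' T)).intervalIntegrable _ _
  rwa [natCast_zsmul, natCast_zsmul, nsmul_eq_mul, mul_div_cancel₀ T (Nat.cast_ne_zero.2 hn),
    AddCircle.intervalIntegral_preimage] at hsum

lemma twistedSum_convolution_twistedSum_coe (hn : n ≠ 0) (hα : α ^ n = 1) (hf : Continuous f)
    (hg : Continuous g) (x a : ℝ) :
    (twistedSum n τ α f ⋆[mul ℂ ℂ] twistedSum n τ α g) x =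
      n • ∫ t in a..(a + T / n), twistedSum n τ α f t * twistedSum n τ α g ↑(x - t) := by
  have hadd (u : AddCircle T → ℂ) := twistedSum_add (nsmul_coe_period_div T hn) hα u
  have hper : Periodic (fun t => twistedSum n τ α f t * twistedSum n τ α g (x - t)) τ := by
    intro t
    beta_reduce
    rw [hadd, ← sub_add_cancel (x - t : AddCircle T) τ, hadd, ← sub_sub]
    ring
  have hfc := continuous_twistedSum hf n τ α
  have hgc := continuous_twistedSum hg n τ α
  rw [convolution_mul, integral_eq_nsmul_intervalIntegral_of_periodic hn (by fun_prop) hper a]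
  rfl

lemma twistedSum_mul_twistedSum_eq_zero (hn : n ≠ 0) (hα : α ^ n = 1) (hf : Continuous f)
    (hg : Continuous g) (hab : a ≤ b) (hab' : a' ≤ b') (hlen : b - a + (b' - a') < T / n)
    (hsf : support f ⊆ periodicHull τ ((↑) '' Icc a b))
    (hsg : support g ⊆ periodicHull τ ((↑) '' Icc a' b')) (hc : a + a' ≤ c)
    (hsfg : support (f ⋆[mul ℂ ℂ] g) ⊆ periodicHull τ ((↑) '' Icc (a + a') c))
    {x y : ℝ} (hx : x ∈ Ioo (b - T / n) (a + T / n)) (hy : y ∈ Ioo (b' - T / n) (a' + T / n))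
    (hxy : c < x + y) : twistedSum n τ α f x * twistedSum n τ α g y = 0 := by
  have hcont {u : AddCircle T → ℂ} (hu : Continuous u) :
      Continuous fun t : ℝ => twistedSum n τ α u t :=
    (continuous_twistedSum hu n τ α).comp (AddCircle.continuous_mk' T)
  refine mul_eq_zero_of_forall_intervalIntegral_eq_zero (hcont hf) (hcont hg)
    (support_twistedSum_coe_inter_subset hn hsf α) (support_twistedSum_coe_inter_subset hn hsg α)
    hab hab' hlen hc (fun s hs => ?_) hx hy hxy
  have hzero : (twistedSum n τ α f ⋆[mul ℂ ℂ] twistedSum n τ α g) s = 0 := by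
    rw [twistedSum_convolution_twistedSum hf hg n τ α]
    refine notMem_support.1 fun hmem => hs.1.not_ge ?_
    exact (mem_Icc_of_coe_mem_periodicHull hn ⟨by linarith [hs.1], hs.2⟩
      (support_twistedSum_subset (support_twistedSum_subset hsfg n α) n α hmem)).2
  rw [twistedSum_convolution_twistedSum_coe hn hα hf hg s a] at hzero
  exact (smul_eq_zero.1 hzero).resolve_left hn

theorem titchmarsh_circle_sup_general (hn : n ≠ 0) (hf : Continuous f) (hg : Continuous g)
    {aI bI aJ bJ bK : ℝ} (hI : aI ≤ bI) (hJ : aJ ≤ bJ) (hlen : bI - aI + (bJ - aJ) < T / n)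
    (hsf : tsupport f ⊆ periodicHull τ ((↑) '' Icc aI bI))
    (hminf : ∀ b < bI, ¬ tsupport f ⊆ periodicHull τ ((↑) '' Icc aI b))
    (hsg : tsupport g ⊆ periodicHull τ ((↑) '' Icc aJ bJ))
    (hming : ∀ b < bJ, ¬ tsupport g ⊆ periodicHull τ ((↑) '' Icc aJ b))
    (hK : aI + aJ ≤ bK) (hbK : bK < bI + bJ)
    (hsfg : tsupport (f ⋆[mul ℂ ℂ] g) ⊆ periodicHull τ ((↑) '' Icc (aI + aJ) bK)) :
    ∃ α β : ℂ, α ^ n = 1 ∧ β ^ n = 1 ∧ α ≠ β ∧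
      (∀ x ∈ Ioo (bK - bJ) (aI + T / n), twistedSum n τ α f x = 0) ∧
      ((∀ x ∈ Ioo bJ (aJ + T / n), twistedSum n τ α g x = 0) ∧
        (bJ : AddCircle T) ∈ tsupport (twistedSum n τ α g)) ∧
      ((∀ x ∈ Ioo bI (aI + T / n), twistedSum n τ β f x = 0) ∧
        (bI : AddCircle T) ∈ tsupport (twistedSum n τ β f)) ∧
      ∀ x ∈ Ioo (bK - bI) (aJ + T / n), twistedSum n τ β g x = 0 := by
  replace hsf := (subset_tsupport f).trans hsf
  replace hsg := (subset_tsupport g).trans hsg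
  obtain ⟨α, hα, hαg⟩ := exists_coe_mem_tsupport_twistedSum hn hsg hming
  obtain ⟨β, hβ, hβf⟩ := exists_coe_mem_tsupport_twistedSum hn hsf hminf
  have hmul {γ : ℂ} (hγ : γ ^ n = 1) {x y : ℝ} (hx : x ∈ Ioo (bI - T / n) (aI + T / n))
      (hy : y ∈ Ioo (bJ - T / n) (aJ + T / n)) (hxy : bK < x + y) :
      twistedSum n τ γ f x * twistedSum n τ γ g y = 0 :=
    twistedSum_mul_twistedSum_eq_zero hn hγ hf hg hI hJ hlen hsf hsg hK
      ((subset_tsupport _).trans hsfg) hx hy hxy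
  have hfα (x : ℝ) (hx : x ∈ Ioo (bK - bJ) (aI + T / n)) : twistedSum n τ α f x = 0 :=
    eq_zero_of_coe_mem_tsupport_of_mul_eq_zero (c := bK) hαg
      (Ioo_mem_nhds (by linarith) (by linarith)) (by linarith [hx.1]) fun y hy hyx =>
        (mul_comm _ _).trans (hmul hα ⟨by linarith [hx.1], hx.2⟩ hy (by linarith))
  have hgβ (y : ℝ) (hy : y ∈ Ioo (bK - bI) (aJ + T / n)) : twistedSum n τ β g y = 0 :=
    eq_zero_of_coe_mem_tsupport_of_mul_eq_zero (c := bK) hβf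
      (Ioo_mem_nhds (by linarith) (by linarith)) (by linarith [hy.1]) fun x hx hxy =>
        hmul hβ hx ⟨by linarith [hy.1], hy.2⟩ hxy
  have hαβ : α ≠ β := by
    rintro rfl
    obtain ⟨y, hy, hgy⟩ := exists_ne_zero_of_coe_mem_tsupport hαg
      (Ioo_mem_nhds (show bK - bI < bJ by linarith) (show bJ < aJ + T / n by linarith))
    exact hgy (hgβ y hy)
  exact ⟨α, β, hα, hβ, hαβ, hfα, ⟨fun x => twistedSum_coe_eq_zero_of_mem_Ioo hn hJ hsg α, hαg⟩,
    ⟨fun x => twistedSum_coe_eq_zero_of_mem_Ioo hn hI hsf β, hβf⟩, hgβ⟩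

end Circle

lemma coe_mul_div_eq_nsmul (T : ℝ) (n k : ℕ) :
    ((T * k / n : ℝ) : AddCircle T) = k • ((T / n : ℝ) : AddCircle T) := by
  rw [← AddCircle.coe_nsmul, nsmul_eq_mul]
  ring_nf

lemma Rn_eq_periodicHull {n : ℕ} (hn : n ≠ 0) (A : Set 𝕋) :
    Rn n A = periodicHull ((2 * π / n : ℝ) : 𝕋) A := by
  have hord : addOrderOf ((2 * π / n : ℝ) : 𝕋) = n := AddCircle.addOrderOf_period_div hn.bot_lt
  have hmultiples : (AddSubgroup.zmultiples ((2 * π / n : ℝ) : 𝕋) : Set 𝕋) =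
      ⋃ k ∈ Finset.range n, {proj (2 * π * k / n)} := by
    classical
    ext z
    have hfin := isOfFinAddOrder_coe_period_div (2 * π) hn
    rw [SetLike.mem_coe, hfin.mem_zmultiples_iff_mem_range_addOrderOf, hord]
    simp [proj, coe_mul_div_eq_nsmul, eq_comm]
  rw [periodicHull, hmultiples, iUnion₂_add]
  simp only [singleton_add]
  rfl

lemma sum_shift_eq_twistedSum (n : ℕ) (α : ℂ) (f : 𝕋 → ℂ) (x : 𝕋) :
    ∑ k : Fin n, α ^ (k : ℕ) * shift (proj (2 * π * k / n)) f x =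
      twistedSum n ((2 * π / n : ℝ) : 𝕋) α f x := by
  simp only [shift, proj, coe_mul_div_eq_nsmul, twistedSum]
  exact Fin.sum_univ_eq_sum_range (fun k => α ^ k * f (x - k • ((2 * π / n : ℝ) : 𝕋))) n

/-- Titchmarsh theorem for distributions on a circle: reflected (supremum) version. -/
theorem titchmarsh_circle_sup (n : ℕ) (hn : 2 ≤ n)
    (f g : 𝕋 → ℂ) (hf : Continuous f) (hg : Continuous g)
    (aI bI aJ bJ : ℝ) (hI : aI ≤ bI) (hJ : aJ ≤ bJ)
    (hlen : (bI - aI) + (bJ - aJ) < 2 * π / n)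
    (hsf : tsupport f ⊆ Rn n (proj '' Icc aI bI))
    (hminf : ∀ a' b' : ℝ, aI ≤ a' → b' ≤ bI → (a', b') ≠ (aI, bI) →
      ¬ tsupport f ⊆ Rn n (proj '' Icc a' b'))
    (hsg : tsupport g ⊆ Rn n (proj '' Icc aJ bJ))
    (hming : ∀ a' b' : ℝ, aJ ≤ a' → b' ≤ bJ → (a', b') ≠ (aJ, bJ) →
      ¬ tsupport g ⊆ Rn n (proj '' Icc a' b'))
    (aK bK : ℝ) (haK : aI + aJ ≤ aK) (hKab : aK ≤ bK) (hbK : bK ≤ bI + bJ)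
    (hsfg : tsupport (circConv f g) ⊆ Rn n (proj '' Icc aK bK))
    (hrho : 0 < bI + bJ - bK) :
    ∃ α β : ℂ, α ^ n = 1 ∧ β ^ n = 1 ∧ α ≠ β ∧
      (∀ x ∈ proj '' Ioo (bI - (bI + bJ - bK)) (aI + 2 * π / n),
        ∑ k : Fin n, α ^ (k : ℕ) * shift (proj (2 * π * k / n)) f x = 0) ∧
      ((∀ x ∈ proj '' Ioo bJ (aJ + 2 * π / n),
        ∑ k : Fin n, α ^ (k : ℕ) * shift (proj (2 * π * k / n)) g x = 0) ∧
        proj bJ ∈ tsupport (fun x =>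
          ∑ k : Fin n, α ^ (k : ℕ) * shift (proj (2 * π * k / n)) g x)) ∧
      ((∀ x ∈ proj '' Ioo bI (aI + 2 * π / n),
        ∑ k : Fin n, β ^ (k : ℕ) * shift (proj (2 * π * k / n)) f x = 0) ∧
        proj bI ∈ tsupport (fun x =>
          ∑ k : Fin n, β ^ (k : ℕ) * shift (proj (2 * π * k / n)) f x)) ∧
      (∀ x ∈ proj '' Ioo (bJ - (bI + bJ - bK)) (aJ + 2 * π / n),
        ∑ k : Fin n, β ^ (k : ℕ) * shift (proj (2 * π * k / n)) g x = 0) := by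
  have hn0 : n ≠ 0 := by omega
  simp only [Rn_eq_periodicHull hn0] at hsf hminf hsg hming hsfg
  obtain ⟨α, β, hα, hβ, hαβ, hfα, ⟨hgα, hbJ⟩, ⟨hfβ, hbI⟩, hgβ⟩ :=
    titchmarsh_circle_sup_general hn0 hf hg hI hJ hlen hsf
      (fun b hb => hminf aI b le_rfl hb.le (by simp [hb.ne])) hsg
      (fun b hb => hming aJ b le_rfl hb.le (by simp [hb.ne])) (haK.trans hKab) (sub_pos.1 hrho)
      (hsfg.trans (periodicHull_mono (image_mono (Icc_subset_Icc_left haK))))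
  simp only [sum_shift_eq_twistedSum, forall_mem_image]
  rw [show bI - (bI + bJ - bK) = bK - bJ by ring, show bJ - (bI + bJ - bK) = bK - bI by ring]
  exact ⟨α, β, hα, hβ, hαβ, hfα, ⟨hgα, hbJ⟩, ⟨hfβ, hbI⟩, hgβ⟩

end
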